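/- (Jordan–Kronecker theorem.) Let K be an algebraically closed field of characteristic zero and let A, B be skew-symmetric n×n matrices over K. Then there exist a finite index type ι and, for each i ∈ ι, a skew canonical block — either a skew Jordan block of size 2k_i with eigenvalue μ_i ∈ K ∪ {∞}, or a skew Kronecker block of size 2l_i − 1 with l_i ≥ 1 — such that the pair (A,B) is congruent to the block-diagonal pair formed by these blocks. -/

import Mathlib

/-!
View `(A, B)` as a pair `(a, b)` of alternating forms on a finite-dimensional space `V`. It suffices
to split off one canonical block: to find a subspace `X` on which the pair is such a block, with a
complement orthogonal to `X` for both forms. Induction on the dimension does the rest.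

The vectors of a block form a *ladder* (`Ladder`): an ascending chain `q` with `a (q 0) = 0` and
`a (q (j + 1)) = b (q j)`, and a descending one `w` with `a (w i) = b (w (i + 1))`. These relations
make the values of `b` on two vectors of the same chain depend only on the sum of the indices;
skew-symmetry then forces them to vanish (`hankel_skew_eq_zero`), so both chains are isotropic for
free. Likewise `b (w i) (q j)` depends only on `j - i`, so everything is determined by the pairings
of `w 0` with `q`. The block's own vectors provide dual functionals (`Ladder.exists_dual`), which
give the orthogonal complement.

The point is the existence of `w` for a given `q`. By linear duality (`exists_left_or_chain`), if no
descending chain `w` pairs nontrivially with the first vector of `q`, then there is another chain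
ascending from that vector, and this contradicts an extremal choice of `q`:

* if the pencil has a polynomial kernel vector, take `q` to be one of minimal degree
  (`exists_kronecker_ladder`); the result is a Kronecker block;
* otherwise take `q` to be a longest chain (`exists_jordan_ladder`), which exists because chains are
  then linearly independent (`chain_length_le`); the result is a Jordan block with eigenvalue `0`.

The second case is applied to `(b, a)` if `b` is degenerate, giving the eigenvalue `∞`, and
otherwise to `(a - μ b, b)`, where `μ` is an eigenvalue of `b⁻¹ a`.
-/

open Matrix

noncomputable section

variable (K : Type*) [Field K]

/-- The `k × k` Jordan block `J_k(μ)` over `K`. -/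
def Jmat (k : ℕ) (μ : K) : Matrix (Fin k) (Fin k) K :=
  Matrix.of fun i j => if (j : ℕ) = (i : ℕ) then μ else if (j : ℕ) = (i : ℕ) + 1 then 1 else 0

/-- The `k × (k+1)` matrix `F_k` with `1` in the entries `(i, i+1)`. -/
def Fmat (k : ℕ) : Matrix (Fin k) (Fin (k + 1)) K :=
  Matrix.of fun i j => if (j : ℕ) = (i : ℕ) + 1 then 1 else 0

/-- The `k × (k+1)` matrix `G_k` with `1` in the entries `(i, i)`. -/
def Gmat (k : ℕ) : Matrix (Fin k) (Fin (k + 1)) K :=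
  Matrix.of fun i j => if (j : ℕ) = (i : ℕ) then 1 else 0

/-- Data of a canonical skew block: a skew Jordan block of size `2k` with
eigenvalue `μ ∈ K ∪ {∞}` (`none` is `∞`), or a skew Kronecker block of size
`2k' + 1` (Kronecker index `l = k' + 1 ≥ 1`). -/
inductive SkewBlockData : Type _
  | jordan (k : ℕ) (μ : Option K)
  | kron (k' : ℕ)

/-- Index type of a canonical skew block. -/
def SkewBlockData.idx : SkewBlockData K → Type
  | .jordan k _ => Fin k ⊕ Fin k
  | .kron k' => Fin k' ⊕ Fin (k' + 1)

/-- The `A`-part of a canonical skew block. -/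
def SkewBlockData.Amat : (b : SkewBlockData K) → Matrix (b.idx) (b.idx) K
  | .jordan k (some μ) => Matrix.fromBlocks 0 (Jmat K k μ) (-(Jmat K k μ)ᵀ) 0
  | .jordan k none =>
      Matrix.fromBlocks 0 (1 : Matrix (Fin k) (Fin k) K) (-(1 : Matrix (Fin k) (Fin k) K)) 0
  | .kron k' => Matrix.fromBlocks 0 (Gmat K k') (-(Gmat K k')ᵀ) 0

/-- The `B`-part of a canonical skew block. -/
def SkewBlockData.Bmat : (b : SkewBlockData K) → Matrix (b.idx) (b.idx) K
  | .jordan k (some _) =>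
      Matrix.fromBlocks 0 (1 : Matrix (Fin k) (Fin k) K) (-(1 : Matrix (Fin k) (Fin k) K)) 0
  | .jordan k none => Matrix.fromBlocks 0 (Jmat K k 0) (-(Jmat K k 0)ᵀ) 0
  | .kron k' => Matrix.fromBlocks 0 (Fmat K k') (-(Fmat K k')ᵀ) 0

section JordanKronecker

open Module Finset

universe u v

variable {K : Type u} [Field K] {V : Type v} [AddCommGroup V] [Module K V]

/-! ### Chains, ladders and their Gram matrices -/

/-- If `v` is a chain, `a (v (j + 1)) = b (v j)` with `a (v 0) = 0`, then so is its convolution with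
any sequence of scalars. -/
theorem conv_chain {a b : V →ₗ[K] V →ₗ[K] K} {k : ℕ} {v : ℕ → V} (h0 : a (v 0) = 0)
    (hv : ∀ j, j + 1 < k → a (v (j + 1)) = b (v j)) (c : ℕ → K) {j : ℕ} (hj : j + 1 < k) :
    a (∑ p ∈ antidiagonal (j + 1), c p.1 • v p.2) = b (∑ p ∈ antidiagonal j, c p.1 • v p.2) := by
  rw [Finset.Nat.sum_antidiagonal_succ', map_add, map_smul, h0, smul_zero, zero_add, map_sum,
    map_sum]
  refine Finset.sum_congr rfl fun p hp => ?_
  rw [map_smul, map_smul, hv]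
  have := Finset.HasAntidiagonal.mem_antidiagonal.1 hp
  omega

/-- An array whose entries depend only on `i + j` is symmetric; if it is also skew, it vanishes. -/
theorem hankel_skew_eq_zero [CharZero K] {k : ℕ} {h : ℕ → ℕ → K} (hs : ∀ i j, h i j = -h j i)
    (hh : ∀ i j, i + 1 < k → j + 1 < k → h (i + 1) j = h i (j + 1)) {i j : ℕ} (hi : i < k)
    (hj : j < k) : h i j = 0 := by
  have key : ∀ t i j, i + t < k → j + t < k → h (i + t) j = h i (j + t) := by
    intro t
    induction t with
    | zero => intros; rfl
    | succ t ih =>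
      intro i j h1 h2
      rw [← add_assoc, hh _ _ (by omega) (by omega), ih _ _ (by omega) (by omega)]
      congr 1; omega
  have main : ∀ i t, i + t < k → h (i + t) i = 0 := by
    intro i t ht
    have h1 := key t i i ht ht
    have h2 := hs (i + t) i
    rw [← h1] at h2
    exact self_eq_neg.1 h2
  rcases le_total i j with hij | hij
  · obtain ⟨t, rfl⟩ := Nat.exists_eq_add_of_le hij
    rw [hs, main i t hj, neg_zero]
  · obtain ⟨t, rfl⟩ := Nat.exists_eq_add_of_le hij
    exact main j t hi

/-- A pair of sequences `w 0, …, w (m - 1)` and `q 0, …, q (n - 1)` such that `q` is an ascending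
chain for the pencil (`a (q (j + 1)) = b (q j)`, `a (q 0) = 0`), `w` is a descending one
(`a (w i) = b (w (i + 1))`), and `w 0` pairs with `q` under `b` to `1, 0, …, 0`. Both sequences are
functions on `ℕ` whose later values play no role. The cases `n = m` and `n = m + 1` are those of a
Jordan block with eigenvalue `0` and of a Kronecker block, respectively. -/
structure Ladder (a b : V →ₗ[K] V →ₗ[K] K) (m n : ℕ) (w q : ℕ → V) : Prop where
  left : ∀ i, i + 1 < m → a (w i) = b (w (i + 1))
  right_zero : a (q 0) = 0
  right : ∀ j, j + 1 < n → a (q (j + 1)) = b (q j)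
  pairing : 0 < m → ∀ j < n, b (w 0) (q j) = if j = 0 then 1 else 0

namespace Ladder

variable {a b : V →ₗ[K] V →ₗ[K] K} {m n : ℕ} {w q : ℕ → V}

theorem b_left_right (L : Ladder a b m n w q) (ha : ∀ x y, a x y = -a y x)
    (hb : ∀ x y, b x y = -b y x) : ∀ i j, i < m → j < n →
    b (w i) (q j) = if j = i then 1 else 0 := by
  intro i
  induction i with
  | zero => exact fun j hi hj => L.pairing hi j hj
  | succ i ih =>
    rintro (_ | j) hi hj
    · rw [← L.left i hi, ha, L.right_zero]; simp
    · rw [← L.left i hi, ha, L.right j hj, ← hb, ih j (by omega) (by omega)]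
      simp

theorem a_left_right (L : Ladder a b m n w q) (ha : ∀ x y, a x y = -a y x)
    (hb : ∀ x y, b x y = -b y x) : ∀ i j, i < m → j < n →
    a (w i) (q j) = if j = i + 1 then 1 else 0 := by
  rintro i (_ | j) hi hj
  · rw [ha, L.right_zero]; simp
  · rw [ha, L.right j hj, ← hb, L.b_left_right ha hb i j hi (by omega)]
    simp

variable [CharZero K]

theorem b_left_left (L : Ladder a b m n w q) (ha : ∀ x y, a x y = -a y x)
    (hb : ∀ x y, b x y = -b y x) {i j : ℕ} (hi : i < m) (hj : j < m) : b (w i) (w j) = 0 :=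
  hankel_skew_eq_zero (h := fun i j => b (w i) (w j)) (fun _ _ => hb _ _)
    (fun i j hi hj => by
      rw [← L.left i hi, ha, L.left j hj, ← hb]) hi hj

theorem a_left_left (L : Ladder a b m n w q) (ha : ∀ x y, a x y = -a y x)
    (hb : ∀ x y, b x y = -b y x) {i j : ℕ} (hi : i < m) (hj : j < m) : a (w i) (w j) = 0 := by
  by_cases hi' : i + 1 < m
  · rw [L.left i hi', L.b_left_left ha hb hi' hj]
  by_cases hj' : j + 1 < m
  · rw [ha, L.left j hj', L.b_left_left ha hb hj' hi, neg_zero]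
  obtain rfl : i = j := by omega
  exact self_eq_neg.1 (ha (w i) (w i))

theorem b_right_right (L : Ladder a b m n w q) (ha : ∀ x y, a x y = -a y x)
    (hb : ∀ x y, b x y = -b y x) {i j : ℕ} (hi : i < n) (hj : j < n) : b (q i) (q j) = 0 :=
  hankel_skew_eq_zero (h := fun i j => b (q i) (q j)) (fun _ _ => hb _ _)
    (fun i j hi hj => by
      rw [← L.right i hi, hb, ← L.right j hj, ← ha]) hi hj

theorem a_right_right (L : Ladder a b m n w q) (ha : ∀ x y, a x y = -a y x)
    (hb : ∀ x y, b x y = -b y x) {i j : ℕ} (hi : i < n) (hj : j < n) : a (q i) (q j) = 0 := by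
  rcases i with _ | i
  · rw [L.right_zero]; rfl
  · rw [L.right i hi, L.b_right_right ha hb (by omega) hj]

end Ladder

/-- Duality: a functional `g` either is nonzero somewhere on the kernel of `Φ` or factors through
`Φ`; in the latter case reflexivity of `V` turns the factor into vectors `u i`. -/
theorem exists_of_dual [FiniteDimensional K V] {W : Type*} [AddCommGroup W] [Module K W] {m : ℕ}
    (Φ : W →ₗ[K] (Fin m → Dual K V)) (g : Dual K W) :
    (∃ w, Φ w = 0 ∧ g w ≠ 0) ∨ ∃ u : Fin m → V, ∀ w, g w = ∑ i, Φ w i (u i) := by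
  by_cases h : ∃ w, Φ w = 0 ∧ g w ≠ 0
  · exact Or.inl h
  right
  push Not at h
  have hg : g ∈ LinearMap.range Φ.dualMap := by
    rw [LinearMap.range_dualMap_eq_dualAnnihilator_ker, Submodule.mem_dualAnnihilator]
    exact h
  obtain ⟨θ, rfl⟩ := hg
  refine ⟨fun i => (evalEquiv K V).symm (θ ∘ₗ LinearMap.single K (fun _ => Dual K V) i),
    fun w => ?_⟩
  have h1 : Φ w = ∑ i, Pi.single i (Φ w i) := (Finset.univ_sum_single (Φ w)).symm
  rw [LinearMap.dualMap_apply]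
  conv_lhs => rw [h1]
  rw [map_sum]
  refine Finset.sum_congr rfl fun i _ => ?_
  simp

/-- The alternative behind both kinds of blocks: either there is a descending sequence `w` whose
first vector pairs nontrivially with `z`, or `b z` starts a chain `u` ascending from `z`. The
coefficients `c` allow the relations to break off (a zero coefficient). -/
theorem exists_left_or_chain [FiniteDimensional K V] {a b : V →ₗ[K] V →ₗ[K] K}
    (ha : ∀ x y, a x y = -a y x) (hb : ∀ x y, b x y = -b y x) (m : ℕ) (c : ℕ → K) (z : V) :
    (∃ w : ℕ → V, (∀ i < m, a (w i) = c i • b (w (i + 1))) ∧ b (w 0) z = 1) ∨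
    ∃ u : ℕ → V, (∀ i, m ≤ i → u i = 0) ∧ a (u 0) = b z ∧ ∀ j, a (u (j + 1)) = c j • b (u j) := by
  rcases exists_of_dual (K := K) (V := V) (W := ℕ → V) (m := m)
    (LinearMap.pi fun i => a ∘ₗ LinearMap.proj (i : ℕ) -
      c i • (b ∘ₗ LinearMap.proj ((i : ℕ) + 1))) (b.flip z ∘ₗ LinearMap.proj 0) with
    ⟨w, hw, hz⟩ | ⟨u, hu⟩
  · left
    have hz' : b (w 0) z ≠ 0 := hz
    refine ⟨fun i => (b (w 0) z)⁻¹ • w i, fun i hi => ?_, ?_⟩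
    · have := congrFun hw ⟨i, hi⟩
      simp only [LinearMap.pi_apply, LinearMap.sub_apply, LinearMap.comp_apply,
        LinearMap.smul_apply, LinearMap.proj_apply, Pi.zero_apply, sub_eq_zero] at this
      rw [map_smul, map_smul, this, smul_comm]
    · simp [hz']
  · right
    -- Extended by zero, `u` satisfies the same identity with sums over `range m`; testing it on
    -- sequences concentrated at one index reads off the relations.
    let u' : ℕ → V := fun i => if h : i < m then u ⟨i, h⟩ else 0
    have hu' : ∀ w : ℕ → V, b (w 0) z =
        ∑ i ∈ range m, (a (w i) (u' i) - c i * b (w (i + 1)) (u' i)) := by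
      intro w
      rw [Finset.sum_range]
      refine (hu w).trans (Finset.sum_congr rfl fun i _ => ?_)
      simp [u']
    have hz : ∀ i, m ≤ i → u' i = 0 := fun i hi => dif_neg (by omega)
    refine ⟨u', hz, ?_, fun j => ?_⟩
    · ext x
      have h := hu' (Pi.single 0 x)
      simp only [Finset.sum_sub_distrib] at h
      rw [Finset.sum_eq_single 0, Finset.sum_eq_zero] at h
      · simp only [Pi.single_eq_same, sub_zero] at h
        rw [ha, ← h, ← hb]
      · intro i _
        simp
      · intro i _ hi
        simp [hi]
      · intro h
        rw [hz 0 (by simpa using h)]; simp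
    · ext x
      have h := hu' (Pi.single (j + 1) x)
      simp only [Finset.sum_sub_distrib] at h
      rw [Finset.sum_eq_single (j + 1), Finset.sum_eq_single j] at h
      · simp only [Pi.single_eq_same,
          Pi.single_eq_of_ne (Nat.succ_ne_zero j).symm, map_zero, LinearMap.zero_apply] at h
        rw [ha, LinearMap.smul_apply, hb, smul_eq_mul, mul_neg, neg_inj]
        exact (sub_eq_zero.1 h.symm)
      · intro i _ hi
        simp [hi]
      · intro h
        rw [hz j (by simpa using h)]; simp
      · intro i _ hi
        simp [hi]
      · intro h
        rw [hz (j + 1) (by simpa using h)]; simp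

/-! ### Existence of ladders -/

/-- The pencil has a nonzero polynomial kernel vector of degree at most `d`: with
`v(t) = ∑ v i t ^ i`, the conditions say `(a - t b) v(t) = 0`. -/
def HasPolyKer (a b : V →ₗ[K] V →ₗ[K] K) (d : ℕ) : Prop :=
  ∃ v : ℕ → V, v ≠ 0 ∧ a (v 0) = 0 ∧ (∀ i, a (v (i + 1)) = b (v i)) ∧ ∀ i, d < i → v i = 0

/-- A polynomial kernel vector of minimal degree is the right half of a ladder: if the left half did
not exist, duality would produce a polynomial kernel vector of smaller degree. -/
theorem exists_kronecker_ladder [FiniteDimensional K V] {a b : V →ₗ[K] V →ₗ[K] K}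
    (ha : ∀ x y, a x y = -a y x) (hb : ∀ x y, b x y = -b y x) (h : ∃ d, HasPolyKer a b d) :
    ∃ d w q, Ladder a b d (d + 1) w q ∧ b (q d) = 0 ∧ q 0 ≠ 0 := by
  classical
  obtain ⟨d, ⟨q, hq, hq0, hqs, hqd⟩, hmin⟩ :
      ∃ d, HasPolyKer a b d ∧ ∀ e < d, ¬ HasPolyKer a b e :=
    ⟨Nat.find h, Nat.find_spec h, fun e he => Nat.find_min h he⟩
  have hne : q 0 ≠ 0 := by
    intro h0
    rcases Nat.eq_zero_or_pos d with rfl | hd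
    · refine hq (funext fun i => ?_)
      rcases i with _ | i
      · exact h0
      · exact hqd _ (by omega)
    · refine hmin (d - 1) (by omega) ⟨fun i => q (i + 1), ?_, ?_, fun i => hqs _,
        fun i hi => hqd _ (by omega)⟩
      · intro h1
        refine hq (funext fun i => ?_)
        rcases i with _ | i
        · exact h0
        · exact congrFun h1 i
      · rw [hqs, h0, map_zero]
  have hbd : b (q d) = 0 := by rw [← hqs, hqd _ (by omega), map_zero]
  rcases Nat.eq_zero_or_pos d with rfl | hd
  · exact ⟨0, 0, q, ⟨fun i hi => by omega, hq0, fun j _ => hqs j, fun h => by omega⟩, hbd, hne⟩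
  rcases exists_left_or_chain ha hb (d - 1) 1 (q 0) with ⟨w, hw, hw1⟩ | ⟨u, hu, hu0, hus⟩
  · refine ⟨d, w, q, ⟨fun i hi => ?_, hq0, fun j _ => hqs j, ?_⟩, hbd, hne⟩
    · simpa using hw i (by omega)
    -- `b (w i) (q j)` depends only on `j - i`, and for `i < j` it can be shifted until it reaches
    -- `b (w (d - 1)) (q j)` with `d ≤ j`, where `b (q j) = a (q (j + 1)) = 0`.
    have key : ∀ t i j, i + 1 + t = d → i < j → b (w i) (q j) = 0 := by
      intro t
      induction t with
      | zero =>
        intro i j h1 h2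
        rw [hb, ← hqs, hqd _ (by omega)]; simp
      | succ t ih =>
        intro i j h1 h2
        have h3 : a (w i) = b (w (i + 1)) := by simpa using hw i (by omega)
        rw [hb, ← hqs, ← ha, h3, ih _ _ (by omega) (by omega)]
    rintro - (_ | j) -
    · simpa using hw1
    · simpa using key (d - 1) 0 (j + 1) (by omega) (by omega)
  -- Prepending `q 0` to the chain `u` gives a polynomial kernel vector of degree `d - 1`.
  · refine absurd ⟨fun i => Nat.casesOn i (q 0) u, ?_, hq0, ?_, ?_⟩ (hmin (d - 1) (by omega))
    · intro h1
      exact hne (congrFun h1 0)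
    · rintro (_ | i)
      · exact hu0
      · simpa using hus i
    · rintro (_ | i) hi
      · omega
      · exact hu i (by omega)

/-- Without polynomial kernel vectors, a chain with nonzero first vector is linearly independent:
convolving it with the coefficients of a linear relation gives a chain ending in `0`, that is, a
polynomial kernel vector. -/
theorem chain_length_le [FiniteDimensional K V] {a b : V →ₗ[K] V →ₗ[K] K}
    (h : ∀ d, ¬ HasPolyKer a b d) {k : ℕ} {v : ℕ → V} (h0 : v 0 ≠ 0) (ha0 : a (v 0) = 0)
    (hv : ∀ j, j + 1 < k → a (v (j + 1)) = b (v j)) : k ≤ finrank K V := by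
  suffices hli : LinearIndependent K (fun i : Fin k => v i) by
    simpa using hli.fintype_card_le_finrank
  by_contra hli
  obtain ⟨g, hg, i₀, hi₀⟩ := Fintype.not_linearIndependent_iff.1 hli
  have hk : 0 < k := i₀.pos
  -- The relation read backwards, so that the last convolution `s (k - 1)` is the relation itself.
  let c : ℕ → K := fun x => if hx : k - 1 - x < k then g ⟨k - 1 - x, hx⟩ else 0
  let s : ℕ → V := fun j => ∑ p ∈ antidiagonal j, c p.1 • v p.2
  have hlast : s (k - 1) = 0 := by
    rw [← hg]
    change ∑ p ∈ antidiagonal (k - 1), c p.1 • v p.2 = _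
    rw [Finset.Nat.sum_antidiagonal_eq_sum_range_succ (fun x y => c x • v y),
      ← Finset.sum_range_reflect, Finset.sum_range]
    obtain ⟨k, rfl⟩ := Nat.exists_eq_succ_of_ne_zero hk.ne'
    refine Finset.sum_congr rfl fun i _ => ?_
    have h1 : k - (k - (i : ℕ)) = i := by omega
    simp [c, h1]
  have hc : ¬ ∀ x < k, c x = 0 := by
    intro hc
    refine hi₀ ?_
    have := hc (k - 1 - i₀) (by omega)
    have h1 : k - 1 - (k - 1 - (i₀ : ℕ)) = i₀ := by omega
    simpa [c, h1] using this
  refine h (k - 1) ⟨fun j => if j < k then s j else 0, ?_, ?_, ?_, ?_⟩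
  · intro hs
    apply hc
    intro x
    induction x using Nat.strong_induction_on with
    | _ x ih =>
      intro hx
      have h1 := congrFun hs x
      simp only [hx, if_true, Pi.zero_apply, s] at h1
      rw [Finset.sum_eq_single (x, 0)] at h1
      · simpa [h0] using h1
      · rintro ⟨y, z⟩ hyz hne
        have hyz' : y + z = x := by simpa using hyz
        have hy : y < x := by
          rcases Nat.eq_zero_or_pos z with rfl | hz
          · exact absurd (by simpa using hyz') hne
          · omega
        simp [ih y hy (by omega)]
      · intro h2; simp at h2
  · simp [hk, s, ha0]
  · intro j
    beta_reduce
    rcases lt_trichotomy (j + 1) k with hj | hj | hj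
    · rw [if_pos hj, if_pos (by omega)]
      exact conv_chain ha0 hv c hj
    · obtain rfl : j = k - 1 := by omega
      rw [if_neg (by omega), if_pos (by omega), hlast]; simp
    · rw [if_neg (by omega), if_neg (by omega)]; simp
  · intro i hi
    exact if_neg (by omega)

/-- A longest chain gives the right half of a ladder: if the left half did not exist, duality would
produce a longer chain. -/
theorem exists_jordan_ladder [FiniteDimensional K V] {a b : V →ₗ[K] V →ₗ[K] K}
    (ha : ∀ x y, a x y = -a y x) (hb : ∀ x y, b x y = -b y x) (h : ∀ d, ¬ HasPolyKer a b d)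
    {z : V} (hz : z ≠ 0) (haz : a z = 0) :
    ∃ k w q, 0 < k ∧ Ladder a b k k w q ∧ a (w (k - 1)) = 0 := by
  classical
  let P : ℕ → Prop := fun k => ∃ v : ℕ → V, v 0 ≠ 0 ∧ a (v 0) = 0 ∧
    ∀ j, j + 1 < k → a (v (j + 1)) = b (v j)
  have hP1 : P 1 := ⟨fun _ => z, hz, haz, fun j hj => by omega⟩
  have hbd : ∀ k, P k → k ≤ finrank K V := fun k ⟨v, h0, ha0, hv⟩ => chain_length_le h h0 ha0 hv
  obtain ⟨k, hk, ⟨v, hv0, hav, hv⟩, hmax⟩ : ∃ k, 0 < k ∧ P k ∧ ¬ P (k + 1) := by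
    have h1 := Nat.findGreatest_spec (P := P) (hbd 1 hP1) hP1
    have h2 := Nat.le_findGreatest (P := P) (hbd 1 hP1) hP1
    refine ⟨_, h2, h1, fun h3 => ?_⟩
    have := Nat.le_findGreatest (hbd _ h3) h3
    omega
  rcases exists_left_or_chain ha hb k (fun i => if i + 1 < k then 1 else 0) (v 0) with
    ⟨w, hw, hw1⟩ | ⟨u, -, hu0, hus⟩
  · have hw' : ∀ i, i + 1 < k → a (w i) = b (w (i + 1)) := fun i hi => by
      simpa [hi] using hw i (by omega)
    -- The pairings of `w 0` with the chain form an invertible power series; convolving the chain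
    -- with the inverse series normalizes them to `1, 0, 0, …`.
    let p : PowerSeries K := PowerSeries.mk fun r => b (w 0) (v r)
    have hp : p⁻¹ * p = 1 := PowerSeries.inv_mul_cancel _ (by simp [p, hw1])
    let q : ℕ → V := fun j => ∑ x ∈ antidiagonal j, PowerSeries.coeff x.1 p⁻¹ • v x.2
    refine ⟨k, w, q, hk, ⟨hw', ?_, fun j hj => 
      conv_chain hav hv (fun i => PowerSeries.coeff i p⁻¹) hj, ?_⟩, ?_⟩
    · simp [q, hav]
    · intro _ j _
      rw [← PowerSeries.coeff_one, ← hp, PowerSeries.coeff_mul]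
      simp [q, p]
    · simpa [Nat.sub_add_cancel hk] using hw (k - 1) (by omega)
  -- Prepending `v 0` to the `k` vectors `u 0, …, u (k - 1)` gives a chain of length `k + 1`.
  · refine absurd ⟨fun i => Nat.casesOn i (v 0) u, hv0, hav, ?_⟩ hmax
    rintro (_ | j) hj
    · exact hu0
    · have h1 := hus j
      rw [if_pos (by omega), one_smul] at h1
      exact h1

/-! ### Ladders as canonical blocks -/

namespace Ladder

variable {a b : V →ₗ[K] V →ₗ[K] K} {m n : ℕ} {w q : ℕ → V}

/-- The family formed by the `m` left and the `n` right vectors of a ladder. -/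
def vec (m n : ℕ) (w q : ℕ → V) : Fin m ⊕ Fin n → V :=
  Sum.elim (fun i => w i) (fun j => q j)

theorem gram_a [CharZero K] (L : Ladder a b m n w q) (ha : ∀ x y, a x y = -a y x)
    (hb : ∀ x y, b x y = -b y x) {S : Matrix (Fin m) (Fin n) K}
    (hS : ∀ i j, S i j = if (j : ℕ) = i + 1 then 1 else 0) (i j : Fin m ⊕ Fin n) :
    a (vec m n w q i) (vec m n w q j) = fromBlocks 0 S (-Sᵀ) 0 i j := by
  rcases i with i | i <;> rcases j with j | j
  · simp [vec, L.a_left_left ha hb i.2 j.2]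
  · simp [vec, L.a_left_right ha hb i j i.2 j.2, hS]
  · rw [ha]
    simp [vec, L.a_left_right ha hb j i j.2 i.2, hS]
  · simp [vec, L.a_right_right ha hb i.2 j.2]

theorem gram_b [CharZero K] (L : Ladder a b m n w q) (ha : ∀ x y, a x y = -a y x)
    (hb : ∀ x y, b x y = -b y x) {S : Matrix (Fin m) (Fin n) K}
    (hS : ∀ i j, S i j = if (j : ℕ) = i then 1 else 0) (i j : Fin m ⊕ Fin n) :
    b (vec m n w q i) (vec m n w q j) = fromBlocks 0 S (-Sᵀ) 0 i j := by
  rcases i with i | i <;> rcases j with j | j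
  · simp [vec, L.b_left_left ha hb i.2 j.2]
  · simp [vec, L.b_left_right ha hb i j i.2 j.2, hS]
  · rw [hb]
    simp [vec, L.b_left_right ha hb j i j.2 i.2, hS]
  · simp [vec, L.b_right_right ha hb i.2 j.2]

/-- Functionals dual to the vectors of a ladder, vanishing together only on vectors orthogonal to
the ladder for both forms. Those dual to the left vectors are `-b (q i)`; those dual to the right
vectors are supplied as `ψ`. -/
theorem exists_dual [CharZero K] (L : Ladder a b m n w q) (ha : ∀ x y, a x y = -a y x)
    (hb : ∀ x y, b x y = -b y x) (hmn : m ≤ n) (hq : ∀ j, m ≤ j → j < n → b (q j) = 0)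
    (ψ : Fin n → Dual K V) (hψw : ∀ j (i : Fin m), ψ j (w i) = 0)
    (hψq : ∀ i j : Fin n, ψ i (q j) = if i = j then 1 else 0)
    (hker : ∀ y, (∀ j, ψ j y = 0) → ∀ i < m, a (w i) y = 0 ∧ b (w i) y = 0) :
    ∃ φ : Fin m ⊕ Fin n → Dual K V,
      (∀ i j, φ i (vec m n w q j) = if i = j then 1 else 0) ∧
      ∀ y, (∀ i, φ i y = 0) → ∀ i, a (vec m n w q i) y = 0 ∧ b (vec m n w q i) y = 0 := by
  refine ⟨Sum.elim (fun i => -b (q i)) ψ, ?_, ?_⟩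
  · rintro (i | i) (j | j)
    · have h := L.b_left_right ha hb j i j.2 (i.2.trans_le hmn)
      rw [hb] at h
      simp [vec, h, Fin.ext_iff]
    · have h := L.b_right_right ha hb (i.2.trans_le hmn) j.2
      simp [vec, h]
    · simp [vec, hψw]
    · simp [vec, hψq]
  · intro y hy
    have hbq : ∀ j < n, b (q j) y = 0 := by
      intro j hj
      by_cases hjm : j < m
      · simpa using hy (Sum.inl ⟨j, hjm⟩)
      · rw [hq j (by omega) hj]; rfl
    rintro (i | i)
    · exact hker y (fun j => hy (Sum.inr j)) i i.2
    · refine ⟨?_, hbq i i.2⟩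
      obtain ⟨_ | j, hj⟩ := i
      · simp [vec, L.right_zero]
      · simp [vec, L.right j hj, hbq j (by omega)]

end Ladder

/-- The block `s` is realized by vectors `x` in `V` together with a dual family `φ` whose common
kernel, a complement of the span of `x`, is orthogonal to `x` for both forms. -/
def SplitsOff (a b : V →ₗ[K] V →ₗ[K] K) (s : SkewBlockData K) : Prop :=
  ∃ (x : s.idx → V) (φ : s.idx → Dual K V),
    (∀ i, φ i (x i) = 1) ∧ (∀ i j, i ≠ j → φ i (x j) = 0) ∧
    (∀ i j, a (x i) (x j) = s.Amat K i j) ∧ (∀ i j, b (x i) (x j) = s.Bmat K i j) ∧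
    ∀ y, (∀ i, φ i y = 0) → ∀ i, a (x i) y = 0 ∧ b (x i) y = 0

/-- In the Kronecker block the `G`-part belongs to `A`, so it comes from the ladder of the pair
`(b, a)`. -/
theorem splitsOff_kron [CharZero K] [FiniteDimensional K V] {a b : V →ₗ[K] V →ₗ[K] K}
    (ha : ∀ x y, a x y = -a y x) (hb : ∀ x y, b x y = -b y x) (h : ∃ d, HasPolyKer b a d) :
    ∃ d, SplitsOff a b (.kron d) := by
  obtain ⟨d, w, q, L, hqd, hq0⟩ := exists_kronecker_ladder hb ha h
  refine ⟨d, ?_⟩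
  have hdual : ∃ φ : Fin d ⊕ Fin (d + 1) → Dual K V,
      (∀ i j, φ i (Ladder.vec d (d + 1) w q j) = if i = j then 1 else 0) ∧
      ∀ y, (∀ i, φ i y = 0) → ∀ i, b (Ladder.vec d (d + 1) w q i) y = 0 ∧
        a (Ladder.vec d (d + 1) w q i) y = 0 := by
    have hq : ∀ j, d ≤ j → j < d + 1 → a (q j) = 0 := by
      intro j h1 h2
      obtain rfl : j = d := by omega
      exact hqd
    rcases Nat.eq_zero_or_pos d with rfl | hd
    -- For `d = 0` the block is a single vector in both radicals; any complement works.
    · obtain ⟨f, hf⟩ : ∃ f : Dual K V, f (q 0) ≠ 0 := by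
        by_contra! hf
        exact hq0 ((forall_dual_apply_eq_zero_iff K _).1 hf)
      refine L.exists_dual hb ha (by omega) hq (fun _ => (f (q 0))⁻¹ • f)
        (fun _ i => i.elim0) (fun i j => ?_) (fun _ _ i hi => by omega)
      obtain rfl : i = 0 := Fin.ext (by omega)
      obtain rfl : j = 0 := Fin.ext (by omega)
      simp [hf]
    · refine L.exists_dual hb ha (by omega) hq
        (fun j => if (j : ℕ) < d then a (w j) else b (w (d - 1))) ?_ ?_ ?_
      · intro j i
        split_ifs with hj
        · exact L.b_left_left hb ha hj i.2
        · exact L.a_left_left hb ha (by omega) i.2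
      · intro i j
        split_ifs with hi hij hij
        · rw [L.b_left_right hb ha i j hi j.2, if_pos (by rw [hij])]
        · rw [L.b_left_right hb ha i j hi j.2, if_neg (fun h => hij (Fin.ext h.symm))]
        · rw [L.a_left_right hb ha _ j (by omega) j.2, if_pos (by omega)]
        · rw [L.a_left_right hb ha _ j (by omega) j.2, if_neg]
          intro h
          exact hij (Fin.ext (by omega))
      · intro y hy
        have h1 : ∀ i < d, a (w i) y = 0 := fun i hi => by
          simpa [hi] using hy ⟨i, by omega⟩
        intro i hi
        refine ⟨?_, h1 i hi⟩
        by_cases hi' : i + 1 < d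
        · rw [L.left i hi', h1 _ hi']
        · obtain rfl : i = d - 1 := by omega
          simpa using hy ⟨d, by omega⟩
  obtain ⟨φ, h1, h2⟩ := hdual
  refine ⟨Ladder.vec d (d + 1) w q, φ, fun i => (h1 i i).trans (if_pos rfl),
    fun i j hij => (h1 i j).trans (if_neg hij), L.gram_b hb ha fun _ _ => rfl,
    L.gram_a hb ha fun _ _ => rfl, fun y hy i => (h2 y hy i).symm⟩

/-- Realization of a Jordan block with eigenvalue `0`, starting from a vector in the radical of `a`.
It is used for the pairs `(b, a)` (eigenvalue `∞`) and `(a - μ b, b)` (eigenvalue `μ`). -/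
theorem exists_jordan_frame [CharZero K] [FiniteDimensional K V] {a b : V →ₗ[K] V →ₗ[K] K}
    (ha : ∀ x y, a x y = -a y x) (hb : ∀ x y, b x y = -b y x) (h : ∀ d, ¬ HasPolyKer a b d)
    {z : V} (hz : z ≠ 0) (haz : a z = 0) :
    ∃ k, 0 < k ∧ ∃ (x : Fin k ⊕ Fin k → V) (φ : Fin k ⊕ Fin k → Dual K V),
      (∀ i, φ i (x i) = 1) ∧ (∀ i j, i ≠ j → φ i (x j) = 0) ∧
      (∀ i j, a (x i) (x j) = fromBlocks 0 (Jmat K k 0) (-(Jmat K k 0)ᵀ) 0 i j) ∧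
      (∀ i j, b (x i) (x j) = fromBlocks 0 (1 : Matrix (Fin k) (Fin k) K) (-1) 0 i j) ∧
      ∀ y, (∀ i, φ i y = 0) → ∀ i, a (x i) y = 0 ∧ b (x i) y = 0 := by
  obtain ⟨k, w, q, hk, L, hlast⟩ := exists_jordan_ladder ha hb h hz haz
  obtain ⟨φ, h1, h2⟩ := L.exists_dual ha hb le_rfl (fun j _ _ => by omega) (fun j => b (w j))
    (fun j i => L.b_left_left ha hb j.2 i.2)
    (fun i j => by rw [L.b_left_right ha hb i j i.2 j.2]; simp only [Fin.ext_iff, eq_comm])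
    (fun y hy i hi => by
      have hb' : ∀ i < k, b (w i) y = 0 := fun i hi => hy ⟨i, hi⟩
      refine ⟨?_, hb' i hi⟩
      by_cases hi' : i + 1 < k
      · rw [L.left i hi', hb' _ hi']
      · obtain rfl : i = k - 1 := by omega
        rw [hlast]; rfl)
  refine ⟨k, hk, Ladder.vec k k w q, φ, fun i => (h1 i i).trans (if_pos rfl),
    fun i j hij => (h1 i j).trans (if_neg hij), L.gram_a ha hb fun i j => ?_, fun i j => ?_, h2⟩
  · simp only [Jmat, Matrix.of_apply]
    split_ifs <;> first | rfl | omega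
  · rw [L.gram_b ha hb (S := 1) (fun i j => by simp [Matrix.one_apply, Fin.ext_iff, eq_comm])]
    simp

theorem splitsOff_jordan_infty [CharZero K] [FiniteDimensional K V] {a b : V →ₗ[K] V →ₗ[K] K}
    (ha : ∀ x y, a x y = -a y x) (hb : ∀ x y, b x y = -b y x) (h : ∀ d, ¬ HasPolyKer b a d)
    {z : V} (hz : z ≠ 0) (hbz : b z = 0) : ∃ k, 0 < k ∧ SplitsOff a b (.jordan k none) := by
  obtain ⟨k, hk, x, φ, h1, h2, h3, h4, h5⟩ := exists_jordan_frame hb ha h hz hbz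
  exact ⟨k, hk, x, φ, h1, h2, h4, h3, fun y hy i => (h5 y hy i).symm⟩

theorem splitsOff_jordan_finite [IsAlgClosed K] [CharZero K] [FiniteDimensional K V] [Nontrivial V]
    {a b : V →ₗ[K] V →ₗ[K] K} (ha : ∀ x y, a x y = -a y x) (hb : ∀ x y, b x y = -b y x)
    (hinj : ∀ z, b z = 0 → z = 0) : ∃ k μ, 0 < k ∧ SplitsOff a b (.jordan k (some μ)) := by
  have hinj' : Function.Injective b := (injective_iff_map_eq_zero b).2 hinj
  let e : V ≃ₗ[K] Dual K V := LinearEquiv.ofInjectiveOfFinrankEq b hinj'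
    Subspace.dual_finrank_eq.symm
  obtain ⟨μ, hμ⟩ := End.exists_eigenvalue (e.symm.toLinearMap ∘ₗ a : End K V)
  obtain ⟨z, hz⟩ := hμ.exists_hasEigenvector
  have haz : a z = μ • b z := by
    have h1 : e.symm (a z) = μ • z := hz.apply_eq_smul
    rw [LinearEquiv.symm_apply_eq, map_smul] at h1
    exact h1
  -- As `b` is injective, the vanishing of the top coefficients propagates down to all of them.
  have hker : ∀ d, ¬ HasPolyKer (a - μ • b) b d := by
    rintro d ⟨v, hv, -, hvs, hvd⟩
    refine hv (funext fun i => ?_)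
    have key : ∀ t i, d + 1 ≤ i + t → v i = 0 := by
      intro t
      induction t with
      | zero => exact fun i hi => hvd i (by omega)
      | succ t ih =>
        intro i hi
        apply hinj
        rw [← hvs, ih (i + 1) (by omega), map_zero]
    exact key (d + 1) i (by omega)
  obtain ⟨k, hk, x, φ, h1, h2, h3, h4, h5⟩ := exists_jordan_frame (a := a - μ • b) (b := b)
    (fun x y => by simp [ha x y, hb x y]; ring) hb hker hz.2 (by simp [haz])
  refine ⟨k, μ, hk, x, φ, h1, h2, ?_, h4, fun y hy i => ?_⟩
  · change ∀ i j : Fin k ⊕ Fin k, _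
    intro i j
    have h := h3 i j
    rw [LinearMap.sub_apply, LinearMap.sub_apply, sub_eq_iff_eq_add, LinearMap.smul_apply,
      LinearMap.smul_apply, h4] at h
    refine h.trans ?_
    rcases i with i | i <;> rcases j with j | j <;>
      simp [SkewBlockData.Amat, Jmat, Matrix.one_apply, Fin.ext_iff] <;>
      split_ifs <;> first | omega | simp
  · have h := h5 y hy i
    refine ⟨?_, h.2⟩
    simpa [h.2] using h.1

/-! ### Splitting off blocks one at a time -/

/-- The pair of forms `(a, b)` has a basis in which both Gram matrices are block diagonal, with the
skew canonical blocks `bl i` as blocks. The index type `ι` of the blocks is an arbitrary finite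
type, which makes adjoining one more block easy. -/
def HasCanonicalBasis (a b : V →ₗ[K] V →ₗ[K] K) : Prop :=
  ∃ (ι : Type) (_ : Fintype ι) (_ : DecidableEq ι) (bl : ι → SkewBlockData K)
    (x : Basis (Σ i, (bl i).idx) K V),
    (∀ p r, a (x p) (x r) = blockDiagonal' (fun i => (bl i).Amat) p r) ∧
    (∀ p r, b (x p) (x r) = blockDiagonal' (fun i => (bl i).Bmat) p r)

theorem SkewBlockData.finite_idx {F : Type*} (s : SkewBlockData F) : Finite s.idx := by
  cases s
  · exact inferInstanceAs (Finite (Fin _ ⊕ Fin _))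
  · exact inferInstanceAs (Finite (Fin _ ⊕ Fin _))

/-- A family `x` with a dual family of functionals `φ` spans a complement of the common kernel of
`φ`, so it extends any basis of that kernel to a basis of `V`. -/
theorem exists_basis_of_dual {s : Type} [Finite s] [DecidableEq s] (x : s → V) (φ : s → Dual K V)
    (h1 : ∀ i, φ i (x i) = 1) (h2 : ∀ i j, i ≠ j → φ i (x j) = 0) {t : Type}
    (y : Basis t K (⨅ i, LinearMap.ker (φ i) : Submodule K V)) :
    ∃ z : Basis (s ⊕ t) K V, (∀ i, z (Sum.inl i) = x i) ∧ ∀ j, z (Sum.inr j) = y j := by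
  have := Fintype.ofFinite s
  let Y : Submodule K V := ⨅ i, LinearMap.ker (φ i)
  have hY : ∀ v, v ∈ Y ↔ ∀ i, φ i v = 0 := fun v => by simp [Y]
  let f : ((s → K) × Y) →ₗ[K] V := (Fintype.linearCombination K x).coprod Y.subtype
  have hφ : ∀ (c : s → K) i, φ i (∑ j, c j • x j) = c i := by
    intro c i
    rw [map_sum, Finset.sum_eq_single i]
    · simp [h1]
    · intro j _ hj
      simp [h2 i j hj.symm]
    · simp
  have hf : ∀ c u, f (c, u) = ∑ j, c j • x j + u := fun c u => by
    simp [f, Fintype.linearCombination_apply]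
  have hbij : Function.Bijective f := by
    constructor
    · rw [injective_iff_map_eq_zero]
      rintro ⟨c, u⟩ h
      rw [hf] at h
      have hc : c = 0 := by
        funext i
        have := congrArg (φ i) h
        rwa [map_add, hφ, (hY u).1 u.2, add_zero, map_zero] at this
      subst hc
      simpa using h
    · intro v
      refine ⟨(fun i => φ i v, ⟨v - ∑ j, φ j v • x j, (hY _).2 fun i => ?_⟩), ?_⟩
      · rw [map_sub, hφ (fun j => φ j v), sub_self]
      · rw [hf]; simp
  refine ⟨((Pi.basisFun K s).prod y).map (LinearEquiv.ofBijective f hbij), fun i => ?_,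
    fun j => ?_⟩
  · simp [hf, Pi.single_apply]
  · simp [hf]

/-- The index set of a block sum with one additional block `s`, placed at `none`. -/
def sigmaOptionElim {α : Type*} {ι : Type} (F : α → Type) (s : α) (bl : ι → α) :
    (F s ⊕ Σ i, F (bl i)) ≃ Σ o : Option ι, F (o.elim s bl) where
  toFun := Sum.elim (fun i => ⟨none, i⟩) (fun p => ⟨some p.1, p.2⟩)
  invFun := fun p => match p with
    | ⟨none, i⟩ => Sum.inl i
    | ⟨some j, i⟩ => Sum.inr ⟨j, i⟩
  left_inv := by rintro (i | ⟨j, i⟩) <;> rfl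
  right_inv := by rintro ⟨_ | j, i⟩ <;> rfl

/-- Gram matrix of a family assembled from one block and a family orthogonal to it. Stated for a
general assignment `M` of matrices to blocks, so that it covers both `Amat` and `Bmat`. -/
theorem gram_option {c : V →ₗ[K] V →ₗ[K] K} (hc : ∀ x y, c x y = -c y x) {ι : Type} [DecidableEq ι]
    (M : ∀ s : SkewBlockData K, Matrix s.idx s.idx K) {s : SkewBlockData K}
    {bl : ι → SkewBlockData K} {z : s.idx ⊕ (Σ i, (bl i).idx) → V}
    (hs : ∀ i j, c (z (Sum.inl i)) (z (Sum.inl j)) = M s i j)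
    (hst : ∀ i p, c (z (Sum.inl i)) (z (Sum.inr p)) = 0)
    (ht : ∀ p r, c (z (Sum.inr p)) (z (Sum.inr r)) = blockDiagonal' (fun i => M (bl i)) p r)
    (p r : Σ o : Option ι, (o.elim s bl).idx) :
    c (z ((sigmaOptionElim (SkewBlockData.idx K) s bl).symm p))
      (z ((sigmaOptionElim (SkewBlockData.idx K) s bl).symm r)) =
    blockDiagonal' (fun o : Option ι => M (o.elim s bl)) p r := by
  obtain ⟨p, rfl⟩ := (sigmaOptionElim (SkewBlockData.idx K) s bl).surjective p
  obtain ⟨r, rfl⟩ := (sigmaOptionElim (SkewBlockData.idx K) s bl).surjective r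
  rw [Equiv.symm_apply_apply, Equiv.symm_apply_apply]
  rcases p with p | ⟨i, p⟩ <;> rcases r with r | ⟨j, r⟩
  · rw [hs]
    exact (blockDiagonal'_apply_eq (fun o : Option ι => M (o.elim s bl)) none p r).symm
  · rw [hst]
    exact (blockDiagonal'_apply_ne (fun o : Option ι => M (o.elim s bl))
      (k := none) (k' := some j) p r (Option.some_ne_none j).symm).symm
  · rw [hc, hst, neg_zero]
    exact (blockDiagonal'_apply_ne (fun o : Option ι => M (o.elim s bl))
      (k := some i) (k' := none) p r (Option.some_ne_none i)).symm
  · rw [ht]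
    by_cases hij : i = j
    · subst hij
      rw [blockDiagonal'_apply_eq]
      exact (blockDiagonal'_apply_eq (fun o : Option ι => M (o.elim s bl)) (some i) p r).symm
    · rw [blockDiagonal'_apply_ne _ _ _ hij]
      exact (blockDiagonal'_apply_ne (fun o : Option ι => M (o.elim s bl))
        (k := some i) (k' := some j) p r (fun h => hij (Option.some_injective _ h))).symm

theorem SplitsOff.hasCanonicalBasis {a b : V →ₗ[K] V →ₗ[K] K} (ha : ∀ x y, a x y = -a y x)
    (hb : ∀ x y, b x y = -b y x) {s : SkewBlockData K} [Nonempty s.idx] [FiniteDimensional K V]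
    (h : SplitsOff a b s)
    (ih : ∀ Y : Submodule K V, finrank K Y < finrank K V →
      HasCanonicalBasis (a.domRestrict₁₂ Y Y) (b.domRestrict₁₂ Y Y)) :
    HasCanonicalBasis a b := by
  classical
  obtain ⟨x, φ, h1, h2, hA, hB, hker⟩ := h
  have := s.finite_idx
  have hlt : finrank K (⨅ i, LinearMap.ker (φ i) : Submodule K V) < finrank K V := by
    apply Submodule.finrank_lt
    intro htop
    obtain ⟨i⟩ := ‹Nonempty s.idx›
    have : x i ∈ (⨅ i, LinearMap.ker (φ i) : Submodule K V) := htop ▸ Submodule.mem_top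
    have := (Submodule.mem_iInf _).1 this i
    rw [LinearMap.mem_ker, h1] at this
    exact one_ne_zero this
  obtain ⟨ι, _, _, bl, y, hyA, hyB⟩ := ih _ hlt
  obtain ⟨z, hz1, hz2⟩ := exists_basis_of_dual x φ h1 h2 y
  have hy : ∀ i j, a (x i) (y j) = 0 ∧ b (x i) (y j) = 0 := fun i j =>
    hker _ (fun i => (Submodule.mem_iInf _).1 (y j).2 i) i
  refine ⟨Option ι, inferInstance, inferInstance, fun o => o.elim s bl,
    z.reindex (sigmaOptionElim (SkewBlockData.idx K) s bl), fun p r => ?_, fun p r => ?_⟩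
  · rw [Basis.reindex_apply, Basis.reindex_apply]
    exact gram_option ha (SkewBlockData.Amat K) (fun i j => by rw [hz1, hz1, hA])
      (fun i p => by rw [hz1, hz2, (hy i p).1]) (fun p r => by rw [hz2, hz2]; exact hyA p r) p r
  · rw [Basis.reindex_apply, Basis.reindex_apply]
    exact gram_option hb (SkewBlockData.Bmat K) (fun i j => by rw [hz1, hz1, hB])
      (fun i p => by rw [hz1, hz2, (hy i p).2]) (fun p r => by rw [hz2, hz2]; exact hyB p r) p r

/-- Every pair of alternating forms has a canonical basis, by strong induction on the dimension: a
polynomial kernel gives a Kronecker block; otherwise a degenerate `b` gives an infinite Jordan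
block and a nondegenerate `b` gives a Jordan block for an eigenvalue of `b⁻¹ a`. -/
theorem hasCanonicalBasis [IsAlgClosed K] [CharZero K] (n : ℕ) :
    ∀ (V : Type v) [AddCommGroup V] [Module K V] [FiniteDimensional K V]
      (a b : V →ₗ[K] V →ₗ[K] K), (∀ x y, a x y = -a y x) → (∀ x y, b x y = -b y x) →
      finrank K V = n → HasCanonicalBasis a b := by
  induction n using Nat.strong_induction_on with
  | _ n ih =>
    intro V _ _ _ a b ha hb hn
    have ih' : ∀ Y : Submodule K V, finrank K Y < finrank K V →
        HasCanonicalBasis (a.domRestrict₁₂ Y Y) (b.domRestrict₁₂ Y Y) := fun Y hY =>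
      ih _ (hn ▸ hY) Y _ _ (fun x y => ha x y) (fun x y => hb x y) rfl
    rcases subsingleton_or_nontrivial V with hV | hV
    · exact ⟨Empty, inferInstance, inferInstance, fun i => i.elim, Basis.empty V,
        fun p => p.1.elim, fun p => p.1.elim⟩
    by_cases hs : ∃ d, HasPolyKer b a d
    · obtain ⟨d, h⟩ := splitsOff_kron ha hb hs
      have : Nonempty (SkewBlockData.kron d : SkewBlockData K).idx :=
        ⟨(Sum.inr 0 : Fin d ⊕ Fin (d + 1))⟩
      exact h.hasCanonicalBasis ha hb ih'
    push Not at hs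
    by_cases hinj : ∀ z, b z = 0 → z = 0
    · obtain ⟨k, μ, hk, h⟩ := splitsOff_jordan_finite ha hb hinj
      have : Nonempty (SkewBlockData.jordan k (some μ) : SkewBlockData K).idx :=
        ⟨(Sum.inl ⟨0, hk⟩ : Fin k ⊕ Fin k)⟩
      exact h.hasCanonicalBasis ha hb ih'
    · push Not at hinj
      obtain ⟨z, hbz, hz⟩ := hinj
      obtain ⟨k, hk, h⟩ := splitsOff_jordan_infty ha hb hs hz hbz
      have : Nonempty (SkewBlockData.jordan k none : SkewBlockData K).idx :=
        ⟨(Sum.inl ⟨0, hk⟩ : Fin k ⊕ Fin k)⟩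
      exact h.hasCanonicalBasis ha hb ih'

theorem blockDiagonal'_comp_equiv {ι κ : Type} [DecidableEq ι] [DecidableEq κ] (f : κ ≃ ι)
    (bl : ι → SkewBlockData K) (M : ∀ s : SkewBlockData K, Matrix s.idx s.idx K)
    (p r : Σ i, (bl (f i)).idx) :
    blockDiagonal' (fun i => M (bl i)) (Equiv.sigmaCongrLeft f p) (Equiv.sigmaCongrLeft f r) =
      blockDiagonal' (fun i => M (bl (f i))) p r := by
  obtain ⟨i, p⟩ := p
  obtain ⟨j, r⟩ := r
  simp only [Equiv.sigmaCongrLeft_apply]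
  by_cases hij : i = j
  · subst hij
    rw [blockDiagonal'_apply_eq, blockDiagonal'_apply_eq]
  · rw [blockDiagonal'_apply_ne _ _ _ fun h => hij (f.injective h),
      blockDiagonal'_apply_ne _ _ _ hij]

theorem HasCanonicalBasis.exists_fin {a b : V →ₗ[K] V →ₗ[K] K} (h : HasCanonicalBasis a b) :
    ∃ (N : ℕ) (bl : Fin N → SkewBlockData K) (x : Basis (Σ i, (bl i).idx) K V),
      (∀ p r, a (x p) (x r) = blockDiagonal' (fun i => (bl i).Amat) p r) ∧
      (∀ p r, b (x p) (x r) = blockDiagonal' (fun i => (bl i).Bmat) p r) := by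
  obtain ⟨ι, _, _, bl, x, hA, hB⟩ := h
  let f := (Fintype.equivFin ι).symm
  refine ⟨Fintype.card ι, fun i => bl (f i), x.reindex (Equiv.sigmaCongrLeft f).symm,
    fun p r => ?_, fun p r => ?_⟩
  · rw [Basis.reindex_apply, Basis.reindex_apply, Equiv.symm_symm, hA]
    exact blockDiagonal'_comp_equiv f bl (SkewBlockData.Amat K) p r
  · rw [Basis.reindex_apply, Basis.reindex_apply, Equiv.symm_symm, hB]
    exact blockDiagonal'_comp_equiv f bl (SkewBlockData.Bmat K) p r

/-! ### From bilinear forms to matrices -/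

theorem toLinearMap₂'_skew {n : ℕ} {A : Matrix (Fin n) (Fin n) K} (hA : Aᵀ = -A)
    (x y : Fin n → K) : Matrix.toLinearMap₂' K A x y = -Matrix.toLinearMap₂' K A y x := by
  rw [Matrix.toLinearMap₂'_apply', Matrix.toLinearMap₂'_apply', dotProduct_comm,
    ← Matrix.vecMul_transpose, hA, ← Matrix.dotProduct_mulVec, Matrix.neg_mulVec,
    dotProduct_neg]

theorem transpose_mul_mul_apply {n : ℕ} (A T : Matrix (Fin n) (Fin n) K) (i j : Fin n) :
    (Tᵀ * A * T) i j = Matrix.toLinearMap₂' K A (T.col i) (T.col j) := by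
  rw [Matrix.toLinearMap₂'_apply', Matrix.mul_assoc, Matrix.mul_apply']
  rfl

end JordanKronecker

/-- Jordan–Kronecker theorem: over an algebraically closed field of
characteristic zero, every pair of skew-symmetric matrices is congruent to a
block-diagonal pair of skew Jordan and skew Kronecker blocks. -/
theorem jordan_kronecker_theorem
    [IsAlgClosed K] [CharZero K]
    (n : ℕ) (A B : Matrix (Fin n) (Fin n) K)
    (hA : Aᵀ = -A) (hB : Bᵀ = -B) :
    ∃ (N : ℕ) (bl : Fin N → SkewBlockData K)
      (e : (Σ i, (bl i).idx) ≃ Fin n)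
      (T : Matrix (Fin n) (Fin n) K),
      IsUnit T.det ∧
      Tᵀ * A * T = Matrix.reindex e e (Matrix.blockDiagonal' fun i => (bl i).Amat) ∧
      Tᵀ * B * T = Matrix.reindex e e (Matrix.blockDiagonal' fun i => (bl i).Bmat) := by
  obtain ⟨N, bl, x, hxA, hxB⟩ := (hasCanonicalBasis (K := K) n (Fin n → K)
    (Matrix.toLinearMap₂' K A) (Matrix.toLinearMap₂' K B) (toLinearMap₂'_skew hA)
    (toLinearMap₂'_skew hB) (by simp)).exists_fin
  let e : (Σ i, (bl i).idx) ≃ Fin n := x.indexEquiv (Pi.basisFun K (Fin n))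
  let T : Matrix (Fin n) (Fin n) K := (Pi.basisFun K (Fin n)).toMatrix (x.reindex e)
  have hT : ∀ j, T.col j = x (e.symm j) := fun j => by
    ext i
    simp [T, Module.Basis.toMatrix_apply]
  refine ⟨N, bl, e, T, ?_, ?_, ?_⟩
  · exact (Pi.basisFun K (Fin n)).isUnit_det (x.reindex e)
  · ext i j
    rw [transpose_mul_mul_apply, hT, hT, hxA]
    rfl
  · ext i j
    rw [transpose_mul_mul_apply, hT, hT, hxB]
    rfl

end
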